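/- Transport relation for the harmonic connected sum: for all nonempty indices k, l, h and every positive integer N, one has Z*_N(←k; ←l; h) = Z*_N(k; ←l; h_→) + Z*_N(←k; l; h_→) + Z*_N(k; l; h_{→↑}), where h_→ appends an entry 1 at the end of h and h_{→↑} appends an entry 2 at the end of h. -/

import Mathlib

open scoped Classical

noncomputable section

/-- Last value of a tuple, with default `d` for the empty tuple. -/
def lastD {c : ℕ} (d : ℕ) (f : Fin c → ℕ) : ℕ :=
  if h : 0 < c then f ⟨c - 1, Nat.sub_lt h Nat.one_pos⟩ else d

/-- First value of a tuple, with default `d` for the empty tuple. -/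
def headD {c : ℕ} (d : ℕ) (f : Fin c → ℕ) : ℕ :=
  if h : 0 < c then f ⟨0, h⟩ else d

/-- The weight `n₁^(-(k₁-1)) · ∏_{i=2}^{a} nᵢ^(-kᵢ)` (the first exponent is lowered by 1). -/
def wtFirst (k : List ℕ) (n : Fin k.length → ℕ) : ℝ :=
  ∏ i, ((n i : ℝ) ^ (if i.1 = 0 then k.get i - 1 else k.get i))⁻¹

/-- The harmonic connected sum `Z*_N(k; l; h)`: the sum of
`n₁^(-(k₁-1)) (∏_{i≥2} nᵢ^(-kᵢ)) · m₁^(-(l₁-1)) (∏_{i≥2} mᵢ^(-lᵢ)) · ∏ rᵢ^(-hᵢ)`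
over `1 ≤ r₁ < ⋯ < r_c`, `n₁ < ⋯ < nₐ ≤ N`, `m₁ < ⋯ < m_b ≤ N` with `r_c = n₁ = m₁`. -/
def Zstar (N : ℕ) (k l h : List ℕ) : ℝ :=
  ∑' p : (Fin k.length → ℕ) × (Fin l.length → ℕ) × (Fin h.length → ℕ),
    Set.indicator
      {p : (Fin k.length → ℕ) × (Fin l.length → ℕ) × (Fin h.length → ℕ) |
        StrictMono p.1 ∧ lastD 0 p.1 ≤ N ∧ StrictMono p.2.1 ∧ lastD 0 p.2.1 ≤ N ∧
          StrictMono p.2.2 ∧ 1 ≤ headD 0 p.2.2 ∧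
          lastD 0 p.2.2 = headD 0 p.1 ∧ lastD 0 p.2.2 = headD 0 p.2.1}
      (fun p => wtFirst k p.1 * wtFirst l p.2.1 * ∏ i, ((p.2.2 i : ℝ) ^ h.get i)⁻¹) p

/-!
Splitting `Z*_N(k; l; h)` according to the value `q` of the connecting entry `r_c = n₁ = m₁` turns
it into `∑ q, A_k(q) A_l(q) H_h(q)`, where `A_k` and `A_l` sum over chains starting at `q` and `H_h`
sums over chains ending at `q`. If `S_k(p)` denotes the sum over chains starting at `p` with no
exponent lowered, then `A_k(p) = p S_k(p)`, `A_{←k}(q) = ∑_{p > q} S_k(p)`, and appending `e` to `h`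
replaces `H_h` by `q ↦ q^(-e) ∑_{r < q} H_h(r)`. The transport relation is then the decomposition of
the sum of `S_k(p) S_l(q) H_h(r)` over `r < p, q` into the parts `p < q`, `q < p` and `p = q`.
-/

section Tuples

variable {c : ℕ}

theorem headD_succ (d : ℕ) (f : Fin (c + 1) → ℕ) : headD d f = f 0 := by
  simp [headD]

theorem lastD_succ (d : ℕ) (f : Fin (c + 1) → ℕ) : lastD d f = f (Fin.last c) := by
  simp [lastD, Fin.last]

theorem apply_le_lastD {f : Fin c → ℕ} (hf : Monotone f) (d : ℕ) (i : Fin c) :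
    f i ≤ lastD d f := by
  cases c with
  | zero => exact i.elim0
  | succ c => exact (hf (Fin.le_last i)).trans_eq (lastD_succ d f).symm

theorem headD_le_lastD {f : Fin c → ℕ} (hf : Monotone f) (d : ℕ) : headD d f ≤ lastD d f := by
  cases c with
  | zero => simp [headD, lastD]
  | succ c => exact (headD_succ d f).trans_le (apply_le_lastD hf d 0)

theorem strictMono_snoc {α : Type*} [Preorder α] {f : Fin (c + 1) → α} {x : α} :
    StrictMono (Fin.snoc f x : Fin (c + 2) → α) ↔ StrictMono f ∧ f (Fin.last c) < x := by
  rw [Fin.strictMono_iff_lt_succ, Fin.strictMono_iff_lt_succ, Fin.forall_fin_succ']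
  simp only [Fin.succ_castSucc, Fin.snoc_castSucc, Fin.succ_last, Fin.snoc_last]

theorem get_append_singleton_comp_cast {α : Type*} (h : List α) (e : α) :
    (h ++ [e]).get ∘ Fin.cast List.length_append.symm =
      (Fin.snoc h.get e : Fin (h.length + 1) → α) := by
  funext i
  cases i using Fin.lastCases <;> simp

end Tuples

section Chains

/-- The strictly increasing tuples of length `a` with first entry `q` and all entries at most `N`.
The empty tuple counts as starting at `0`, following `headD 0`. -/
def chainsFrom (N a q : ℕ) : Finset (Fin a → ℕ) :=
  {n ∈ Fintype.piFinset fun _ => Finset.Iic N | StrictMono n ∧ headD 0 n = q}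

/-- The strictly increasing tuples of positive integers of length `c` with last entry `q`; there is
none of length `0`. -/
def chainsTo (c q : ℕ) : Finset (Fin c → ℕ) :=
  {r ∈ Fintype.piFinset fun _ => Finset.Iic q | StrictMono r ∧ 1 ≤ headD 0 r ∧ lastD 0 r = q}

variable {N a c q : ℕ}

theorem mem_chainsFrom {n : Fin a → ℕ} :
    n ∈ chainsFrom N a q ↔ StrictMono n ∧ lastD 0 n ≤ N ∧ headD 0 n = q := by
  simp only [chainsFrom, Finset.mem_filter, Fintype.mem_piFinset, Finset.mem_Iic]
  constructor
  · rintro ⟨hN, hn, hq⟩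
    refine ⟨hn, ?_, hq⟩
    cases a with
    | zero => simp [lastD]
    | succ a => exact (lastD_succ 0 n).trans_le (hN _)
  · rintro ⟨hn, hN, hq⟩
    exact ⟨fun i => (apply_le_lastD hn.monotone 0 i).trans hN, hn, hq⟩

theorem mem_chainsTo {r : Fin c → ℕ} :
    r ∈ chainsTo c q ↔ StrictMono r ∧ 1 ≤ headD 0 r ∧ lastD 0 r = q := by
  simp only [chainsTo, Finset.mem_filter, Fintype.mem_piFinset, Finset.mem_Iic,
    and_iff_right_iff_imp]
  rintro ⟨hr, -, rfl⟩
  exact apply_le_lastD hr.monotone 0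

theorem le_of_mem_chainsFrom {n : Fin a → ℕ} (hn : n ∈ chainsFrom N a q) : q ≤ N := by
  obtain ⟨hmono, hN, rfl⟩ := mem_chainsFrom.1 hn
  exact (headD_le_lastD hmono.monotone 0).trans hN

theorem one_le_of_mem_chainsTo {r : Fin c → ℕ} (hr : r ∈ chainsTo c q) : 1 ≤ q := by
  obtain ⟨hmono, hr1, rfl⟩ := mem_chainsTo.1 hr
  exact hr1.trans (headD_le_lastD hmono.monotone 0)

theorem mem_chainsFrom_succ {n : Fin (a + 1) → ℕ} :
    n ∈ chainsFrom N (a + 1) q ↔ StrictMono n ∧ n (Fin.last a) ≤ N ∧ n 0 = q := by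
  rw [mem_chainsFrom, lastD_succ, headD_succ]

theorem mem_chainsTo_succ {r : Fin (c + 1) → ℕ} :
    r ∈ chainsTo (c + 1) q ↔ StrictMono r ∧ 1 ≤ r 0 ∧ r (Fin.last c) = q := by
  rw [mem_chainsTo, lastD_succ, headD_succ]

theorem cons_mem_chainsFrom {x : ℕ} {n : Fin (a + 1) → ℕ} :
    (Fin.cons x n : Fin (a + 2) → ℕ) ∈ chainsFrom N (a + 2) q ↔
      x = q ∧ x < n 0 ∧ n ∈ chainsFrom N (a + 1) (n 0) := by
  have hmono : StrictMono (Fin.cons x n : Fin (a + 2) → ℕ) ↔ x < n 0 ∧ StrictMono n :=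
    strictMono_vecCons
  simp only [mem_chainsFrom_succ, hmono, Fin.cons_zero, ← Fin.succ_last, Fin.cons_succ]
  tauto

theorem snoc_mem_chainsTo {x : ℕ} {r : Fin (c + 1) → ℕ} :
    (Fin.snoc r x : Fin (c + 2) → ℕ) ∈ chainsTo (c + 2) q ↔
      x = q ∧ r (Fin.last c) < x ∧ r ∈ chainsTo (c + 1) (r (Fin.last c)) := by
  simp only [mem_chainsTo_succ, strictMono_snoc, Fin.snoc_last, Fin.snoc_apply_zero]
  tauto

variable {M : Type*} [AddCommMonoid M]

theorem sum_chainsFrom_add_two (N a q : ℕ) (f : (Fin (a + 2) → ℕ) → M) :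
    ∑ n ∈ chainsFrom N (a + 2) q, f n =
      ∑ p ∈ Finset.Ioc q N, ∑ n ∈ chainsFrom N (a + 1) p, f (Fin.cons q n) := by
  rw [Finset.sum_sigma']
  refine Finset.sum_bij' (fun n _ => ⟨n 1, Fin.tail n⟩) (fun x _ => Fin.cons q x.2) ?_ ?_ ?_ ?_ ?_
  · intro n hn
    rw [← Fin.cons_self_tail n, cons_mem_chainsFrom] at hn
    obtain ⟨hq, hlt, htail⟩ := hn
    exact Finset.mem_sigma.2
      ⟨Finset.mem_Ioc.2 ⟨hq ▸ hlt, le_of_mem_chainsFrom htail⟩, htail⟩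
  · rintro ⟨p, n⟩ hx
    obtain ⟨hp, hn⟩ := Finset.mem_sigma.1 hx
    obtain rfl : n 0 = p := (mem_chainsFrom_succ.1 hn).2.2
    exact cons_mem_chainsFrom.2 ⟨rfl, (Finset.mem_Ioc.1 hp).1, hn⟩
  · intro n hn
    obtain rfl := (mem_chainsFrom_succ.1 hn).2.2
    exact Fin.cons_self_tail n
  · rintro ⟨p, n⟩ hx
    obtain rfl : n 0 = p := (mem_chainsFrom_succ.1 (Finset.mem_sigma.1 hx).2).2.2
    rfl
  · intro n hn
    obtain rfl := (mem_chainsFrom_succ.1 hn).2.2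
    rw [Fin.cons_self_tail]

theorem sum_chainsTo_add_two (c q : ℕ) (f : (Fin (c + 2) → ℕ) → M) :
    ∑ r ∈ chainsTo (c + 2) q, f r =
      ∑ p ∈ Finset.Ico 1 q, ∑ r ∈ chainsTo (c + 1) p, f (Fin.snoc r q) := by
  rw [Finset.sum_sigma']
  refine Finset.sum_bij' (fun r _ => ⟨Fin.init r (Fin.last c), Fin.init r⟩)
    (fun x _ => Fin.snoc x.2 q) ?_ ?_ ?_ ?_ ?_
  · intro r hr
    rw [← Fin.snoc_init_self r, snoc_mem_chainsTo] at hr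
    obtain ⟨hq, hlt, hinit⟩ := hr
    exact Finset.mem_sigma.2
      ⟨Finset.mem_Ico.2 ⟨one_le_of_mem_chainsTo hinit, hq ▸ hlt⟩, hinit⟩
  · rintro ⟨p, r⟩ hx
    obtain ⟨hp, hr⟩ := Finset.mem_sigma.1 hx
    obtain rfl : r (Fin.last c) = p := (mem_chainsTo_succ.1 hr).2.2
    exact snoc_mem_chainsTo.2 ⟨rfl, (Finset.mem_Ico.1 hp).2, hr⟩
  · intro r hr
    obtain rfl := (mem_chainsTo_succ.1 hr).2.2
    exact Fin.snoc_init_self r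
  · rintro ⟨p, r⟩ hx
    obtain rfl : r (Fin.last c) = p := (mem_chainsTo_succ.1 (Finset.mem_sigma.1 hx).2).2.2
    simp
  · intro r hr
    obtain rfl := (mem_chainsTo_succ.1 hr).2.2
    rw [Fin.snoc_init_self]

end Chains

section Weights

/-- The weight `∏ nᵢ^(-kᵢ)` of a chain `n`, with no exponent lowered. -/
def harmonicWeight {a : ℕ} (k n : Fin a → ℕ) : ℝ :=
  ∏ i, ((n i : ℝ) ^ k i)⁻¹

theorem harmonicWeight_snoc {c : ℕ} (h r : Fin c → ℕ) (e q : ℕ) :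
    harmonicWeight (Fin.snoc h e : Fin (c + 1) → ℕ) (Fin.snoc r q) =
      ((q : ℝ) ^ e)⁻¹ * harmonicWeight h r := by
  simp [harmonicWeight, Fin.prod_univ_castSucc, mul_comm]

theorem wtFirst_one_cons (k : List ℕ) (q : ℕ) (n : Fin k.length → ℕ) :
    wtFirst (1 :: k) (Fin.cons q n : Fin (k.length + 1) → ℕ) = harmonicWeight k.get n := by
  simp [wtFirst, harmonicWeight, Fin.prod_univ_succ]

theorem wtFirst_cons {x : ℕ} (hx : 1 ≤ x) (k : List ℕ) {n : Fin (k.length + 1) → ℕ}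
    (hn : n 0 ≠ 0) : wtFirst (x :: k) n = n 0 * harmonicWeight (x :: k).get n := by
  obtain ⟨j, rfl⟩ := Nat.exists_eq_add_of_le' hx
  have hn' : (n 0 : ℝ) ≠ 0 := Nat.cast_ne_zero.2 hn
  have head_factor : ((n 0 : ℝ) ^ j)⁻¹ = n 0 * ((n 0 : ℝ) ^ (j + 1))⁻¹ := by
    rw [pow_succ]
    field_simp
  simp [wtFirst, harmonicWeight, Fin.prod_univ_succ, head_factor, mul_left_comm]

end Weights

section ChainSums

/-- The multiple harmonic sum `S_k(q)` of weights `∏ nᵢ^(-kᵢ)` over `q = n₁ < ⋯ < nₐ ≤ N`. -/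
def startSum (N : ℕ) (k : List ℕ) (q : ℕ) : ℝ :=
  ∑ n ∈ chainsFrom N k.length q, harmonicWeight k.get n

/-- The variant `A_k(q)` of `startSum` in which the exponent of `n₁ = q` is lowered by `1`, as in
the connected sum. -/
def loweredStartSum (N : ℕ) (k : List ℕ) (q : ℕ) : ℝ :=
  ∑ n ∈ chainsFrom N k.length q, wtFirst k n

/-- The multiple harmonic sum `H_h(q)` of weights `∏ rᵢ^(-hᵢ)` over `1 ≤ r₁ < ⋯ < r_c = q`. -/
def endSum (h : List ℕ) (q : ℕ) : ℝ :=
  ∑ r ∈ chainsTo h.length q, harmonicWeight h.get r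

theorem loweredStartSum_one_cons (N : ℕ) {k : List ℕ} (hk : k ≠ []) (q : ℕ) :
    loweredStartSum N (1 :: k) q = ∑ p ∈ Finset.Ioc q N, startSum N k p := by
  obtain ⟨x, k, rfl⟩ := List.exists_cons_of_ne_nil hk
  refine (sum_chainsFrom_add_two N k.length q _).trans ?_
  exact Finset.sum_congr rfl fun p _ => Finset.sum_congr rfl fun n _ =>
    wtFirst_one_cons (x :: k) q n

theorem loweredStartSum_eq_mul_startSum (N : ℕ) {k : List ℕ} (hk : k ≠ [])
    (hk1 : 1 ≤ k.head hk) {q : ℕ} (hq : q ≠ 0) :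
    loweredStartSum N k q = q * startSum N k q := by
  obtain ⟨x, k, rfl⟩ := List.exists_cons_of_ne_nil hk
  rw [startSum, Finset.mul_sum]
  refine Finset.sum_congr rfl fun n hn => ?_
  obtain rfl := (mem_chainsFrom_succ.1 hn).2.2
  exact wtFirst_cons hk1 k hq

theorem endSum_eq_sum_comp_cast (h : List ℕ) {c : ℕ} (hc : c = h.length) (q : ℕ) :
    endSum h q = ∑ r ∈ chainsTo c q, harmonicWeight (h.get ∘ Fin.cast hc) r := by
  subst hc
  rfl

theorem endSum_append_singleton {h : List ℕ} (hh : h ≠ []) (e q : ℕ) :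
    endSum (h ++ [e]) q = ((q : ℝ) ^ e)⁻¹ * ∑ p ∈ Finset.Ico 1 q, endSum h p := by
  rw [endSum_eq_sum_comp_cast _ List.length_append.symm, get_append_singleton_comp_cast]
  obtain ⟨z, h, rfl⟩ := List.exists_cons_of_ne_nil hh
  refine (sum_chainsTo_add_two h.length q _).trans ?_
  simp only [endSum, Finset.mul_sum]
  exact Finset.sum_congr rfl fun p _ => Finset.sum_congr rfl fun r _ =>
    harmonicWeight_snoc _ r e q

theorem Zstar_eq_sum (N : ℕ) (k l h : List ℕ) :
    Zstar N k l h =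
      ∑ q ∈ Finset.Icc 1 N, loweredStartSum N k q * loweredStartSum N l q * endSum h q := by
  let T (q : ℕ) : Finset ((Fin k.length → ℕ) × (Fin l.length → ℕ) × (Fin h.length → ℕ)) :=
    chainsFrom N k.length q ×ˢ chainsFrom N l.length q ×ˢ chainsTo h.length q
  have mem_T {q p} : p ∈ T q ↔ p.1 ∈ chainsFrom N k.length q ∧
      p.2.1 ∈ chainsFrom N l.length q ∧ p.2.2 ∈ chainsTo h.length q := by
    simp only [T, Finset.mem_product]
  have disjoint_T : Set.PairwiseDisjoint (Finset.Icc 1 N : Set ℕ) T := by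
    intro q _ q' _ hne
    refine Finset.disjoint_left.2 fun p hp hp' => hne ?_
    exact (mem_chainsTo.1 (mem_T.1 hp).2.2).2.2.symm.trans
      (mem_chainsTo.1 (mem_T.1 hp').2.2).2.2
  let w (p : (Fin k.length → ℕ) × (Fin l.length → ℕ) × (Fin h.length → ℕ)) : ℝ :=
    wtFirst k p.1 * wtFirst l p.2.1 * harmonicWeight h.get p.2.2
  have sum_T (q : ℕ) : ∑ p ∈ T q, w p =
      loweredStartSum N k q * loweredStartSum N l q * endSum h q := by
    simp only [T, w, Finset.sum_product, ← Finset.mul_sum, ← Finset.sum_mul, loweredStartSum,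
      endSum, mul_assoc]
  simp only [← sum_T]
  rw [← Finset.sum_biUnion disjoint_T, ← Finset.tsum_subtype' _ w, tsum_subtype _ w, Zstar]
  congr! 3
  ext ⟨n, m, r⟩
  simp only [Set.mem_ofPred_eq, Finset.mem_coe, Finset.mem_biUnion, Finset.mem_Icc, mem_T,
    mem_chainsFrom, mem_chainsTo]
  constructor
  · rintro ⟨hn, hnN, hm, hmN, hr, hr1, hrn, hrm⟩
    exact ⟨lastD 0 r, ⟨hr1.trans (headD_le_lastD hr.monotone 0),
      hrn.trans_le ((headD_le_lastD hn.monotone 0).trans hnN)⟩,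
      ⟨hn, hnN, hrn.symm⟩, ⟨hm, hmN, hrm.symm⟩, hr, hr1, rfl⟩
  · rintro ⟨q, -, ⟨hn, hnN, hnq⟩, ⟨hm, hmN, hmq⟩, hr, hr1, hrq⟩
    exact ⟨hn, hnN, hm, hmN, hr, hr1, hrq.trans hnq.symm, hrq.trans hmq.symm⟩

end ChainSums

section Trichotomy

variable {ι R : Type*} [LinearOrder ι] [CommSemiring R]

theorem sum_mul_sum_eq_sum_trichotomy (s : Finset ι) (f g : ι → R) :
    (∑ p ∈ s, f p) * ∑ q ∈ s, g q =
      ∑ p ∈ s, (f p * ∑ q ∈ s with p < q, g q + (∑ q ∈ s with p < q, f q) * g p + f p * g p) := by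
  have lower : ∑ p ∈ s, (∑ q ∈ s with p < q, f q) * g p =
      ∑ p ∈ s, f p * ∑ q ∈ s with q < p, g q := by
    simp only [Finset.sum_mul, Finset.mul_sum]
    exact Finset.sum_comm' (by grind)
  have split (p : ι) (hp : p ∈ s) :
      ∑ q ∈ s, g q = ∑ q ∈ s with p < q, g q + ∑ q ∈ s with q < p, g q + g p := by
    rw [← Finset.sum_erase_add _ _ hp,
      ← Finset.sum_filter_add_sum_filter_not (s.erase p) (p < ·)]
    congr 3 <;> grind
  rw [Finset.sum_add_distrib, Finset.sum_add_distrib, lower, ← Finset.sum_add_distrib,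
    ← Finset.sum_add_distrib, Finset.sum_mul]
  exact Finset.sum_congr rfl fun p hp => by rw [split p hp, mul_add, mul_add]

theorem sum_Icc_sum_Ioc_mul_sum_Ioc_mul [LocallyFiniteOrder ι] (a b : ι) (f g u : ι → R) :
    ∑ r ∈ Finset.Icc a b, (∑ p ∈ Finset.Ioc r b, f p) * (∑ q ∈ Finset.Ioc r b, g q) * u r =
      ∑ p ∈ Finset.Icc a b,
        (f p * ∑ q ∈ Finset.Ioc p b, g q + (∑ q ∈ Finset.Ioc p b, f q) * g p + f p * g p) *
          ∑ r ∈ Finset.Ico a p, u r := by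
  have filter_lt {r p : ι} (hp : p ∈ Finset.Ioc r b) :
      {q ∈ Finset.Ioc r b | p < q} = Finset.Ioc p b := by
    grind
  simp only [sum_mul_sum_eq_sum_trichotomy, Finset.sum_mul _ _ (u _), Finset.mul_sum _ u]
  rw [Finset.sum_comm' (t' := Finset.Icc a b) (s' := Finset.Ico a) (by grind)]
  refine Finset.sum_congr rfl fun p hp => Finset.sum_congr rfl fun r hr => ?_
  rw [filter_lt (by grind)]

end Trichotomy

theorem Zstar_transport_general (N : ℕ) {k l h : List ℕ} (hk : k ≠ []) (hk1 : 1 ≤ k.head hk)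
    (hl : l ≠ []) (hl1 : 1 ≤ l.head hl) (hh : h ≠ []) :
    Zstar N (1 :: k) (1 :: l) h =
      Zstar N k (1 :: l) (h ++ [1]) + Zstar N (1 :: k) l (h ++ [1]) +
        Zstar N k l (h ++ [2]) := by
  simp only [Zstar_eq_sum, loweredStartSum_one_cons N hk, loweredStartSum_one_cons N hl,
    endSum_append_singleton hh]
  rw [sum_Icc_sum_Ioc_mul_sum_Ioc_mul, ← Finset.sum_add_distrib, ← Finset.sum_add_distrib]
  refine Finset.sum_congr rfl fun q hq => ?_
  have hq0 : q ≠ 0 := Nat.one_le_iff_ne_zero.1 (Finset.mem_Icc.1 hq).1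
  rw [loweredStartSum_eq_mul_startSum N hk hk1 hq0, loweredStartSum_eq_mul_startSum N hl hl1 hq0]
  field_simp

/-- **Transport relation for the harmonic connected sum:**
`Z*_N(←k; ←l; h) = Z*_N(k; ←l; h_→) + Z*_N(←k; l; h_→) + Z*_N(k; l; h_{→↑})`
for nonempty indices `k`, `l`, `h` and `N ≥ 1`; here `←k = 1 :: k`,
`h_→ = h ++ [1]` and `h_{→↑} = h ++ [2]`. -/
theorem Zstar_transport (N : ℕ) (hN : 0 < N) (k l h : List ℕ)
    (hk : k ≠ []) (hk1 : ∀ i ∈ k, 1 ≤ i)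
    (hl : l ≠ []) (hl1 : ∀ i ∈ l, 1 ≤ i)
    (hh : h ≠ []) (hh1 : ∀ i ∈ h, 1 ≤ i) :
    Zstar N (1 :: k) (1 :: l) h =
      Zstar N k (1 :: l) (h ++ [1]) + Zstar N (1 :: k) l (h ++ [1]) +
        Zstar N k l (h ++ [2]) :=
  Zstar_transport_general N hk (hk1 _ (List.head_mem hk)) hl (hl1 _ (List.head_mem hl)) hh
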